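/- Let H=(G,ξ) be a temporal graph with temporal domain t_1 < ... < t_n, let P be a BGP, and let 1 ≤ i ≤ n. Let μ be a maximal partial matching of P in the history Hist(H, t_{i-1}) and let μ' be a partial matching of P in the history Hist(H, t_i) such that μ ⊆ μ' (μ' extends μ as a function). Then the timed words w_μ and w_{μ'} have the same prefix of length i−1; that is, writing w_μ = (t_1,a_1)...(t_n,a_n) and w_{μ'} = (t_1,b_1)...(t_n,b_n), we have a_j = b_j for every j with 1 ≤ j ≤ i−1. -/

import Mathlib

/-!
Restrict `μ'` to the nodes and edges of the earlier history `Hist(H, t_{i-1})`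
(`PMatch.restrict`). The restriction is again a partial matching, since the endpoints of a
history edge are history nodes (`isPartialMatching_restrict`), and it extends `μ`, because `μ`
takes its values in that history (`extends_restrict`). Maximality therefore forces the
restriction to equal `μ`. An edge active at some `t_j` with `1 ≤ j ≤ i - 1` belongs to that
history, so an edge variable that `μ'` maps to such an edge has the same image under `μ`.
-/


/-- A graph `(N, E, ρ, λ)`: sets of nodes and edges, source/destination maps,
and labeling functions for nodes and edges. -/
structure TGraph (V E L : Type) where
  nodes : Set V
  edges : Set E
  src : E → V
  dst : E → V
  nlbl : V → L
  elbl : E → L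

/-- A basic graph pattern (BGP): node constants are actual nodes (type `V`),
`X` is the type of node variables, `Y` the type of edge variables. Each edge
variable gets a source and destination which is either a node constant
(`Sum.inl`) or a node variable (`Sum.inr`); `λ_P` is a partial labeling. -/
structure TBGP (V X Y L : Type) where
  src : Y → V ⊕ X
  dst : Y → V ⊕ X
  nlbl : X → Option L
  elbl : Y → Option L

/-- A candidate partial matching: partial maps from node variables to nodes
and from edge variables to edges. -/
structure PMatch (V E X Y : Type) where
  mX : X → Option V
  mY : Y → Option E

/-- The endpoint condition `ρ(μ(y)) = (μ(x₁), μ(x₂))`, with `μ(c) = c` for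
node constants: `v` is the actual endpoint of the matched edge,
`side` the corresponding endpoint of the edge variable in the pattern. -/
def endpointOK {V E X Y : Type} (μ : PMatch V E X Y) (side : V ⊕ X) (v : V) : Prop :=
  match side with
  | Sum.inl c => v = c
  | Sum.inr x => μ.mX x = some v

/-- `μ` is a partial matching of the BGP `P` in the graph `G`. -/
def IsPartialMatching {V E X Y L : Type} (P : TBGP V X Y L) (G : TGraph V E L)
    (μ : PMatch V E X Y) : Prop :=
  (∀ x v, μ.mX x = some v → v ∈ G.nodes) ∧
  (∀ y e, μ.mY y = some e → e ∈ G.edges) ∧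
  (∀ y e, μ.mY y = some e →
      endpointOK μ (P.src y) (G.src e) ∧ endpointOK μ (P.dst y) (G.dst e)) ∧
  (∀ x v l, μ.mX x = some v → P.nlbl x = some l → G.nlbl v = l) ∧
  (∀ y e l, μ.mY y = some e → P.elbl y = some l → G.elbl e = l)

/-- `μ'` extends `μ` as a function (i.e., `μ ⊆ μ'`). -/
def Extends {V E X Y : Type} (μ μ' : PMatch V E X Y) : Prop :=
  (∀ x v, μ.mX x = some v → μ'.mX x = some v) ∧
  (∀ y e, μ.mY y = some e → μ'.mY y = some e)

/-- `μ` is a maximal partial matching of `P` in `G`: it is a partial matching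
and no partial matching of `P` in `G` strictly extends it. -/
def IsMaximal {V E X Y L : Type} (P : TBGP V X Y L) (G : TGraph V E L)
    (μ : PMatch V E X Y) : Prop :=
  IsPartialMatching P G μ ∧
    ∀ μ', IsPartialMatching P G μ' → Extends μ μ' → μ' = μ

/-- Edges of the history `Hist(H, t_i)`: edges of `G` active at some `t_j`, `1 ≤ j ≤ i`. -/
def histEdges {V E L : Type} (G : TGraph V E L) (ξ : E → Finset ℝ) (t : ℕ → ℝ)
    (i : ℕ) : Set E :=
  {e | e ∈ G.edges ∧ ∃ j, 1 ≤ j ∧ j ≤ i ∧ t j ∈ ξ e}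

/-- The history `Hist(H, t_i)`: the subgraph of `G` induced by all edges active
at some `t_j` with `j ≤ i` (`i = 0` gives the empty graph). -/
def hist {V E L : Type} (G : TGraph V E L) (ξ : E → Finset ℝ) (t : ℕ → ℝ)
    (i : ℕ) : TGraph V E L where
  nodes := {v | ∃ e ∈ histEdges G ξ t i, G.src e = v ∨ G.dst e = v}
  edges := histEdges G ξ t i
  src := G.src
  dst := G.dst
  nlbl := G.nlbl
  elbl := G.elbl

/-- The `j`-th letter of the timed word `w_μ`:
`a_j = {y ∈ Y : μ is defined on y and t_j ∈ ξ(μ(y))}`. -/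
def letterAt {V E X Y : Type} (ξ : E → Finset ℝ) (t : ℕ → ℝ)
    (μ : PMatch V E X Y) (j : ℕ) : Set Y :=
  {y | ∃ e, μ.mY y = some e ∧ t j ∈ ξ e}

open Classical in
/-- The restriction of a partial map to the variables whose image lies in the graph `G`. -/
noncomputable def PMatch.restrict {V E X Y L : Type} (μ : PMatch V E X Y) (G : TGraph V E L) :
    PMatch V E X Y where
  mX x := (μ.mX x).filter (fun v => decide (v ∈ G.nodes))
  mY y := (μ.mY y).filter (fun e => decide (e ∈ G.edges))

theorem PMatch.restrict_mX_eq_some {V E X Y L : Type} (μ : PMatch V E X Y) (G : TGraph V E L)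
    (x : X) (v : V) : (μ.restrict G).mX x = some v ↔ μ.mX x = some v ∧ v ∈ G.nodes := by
  simp [PMatch.restrict, Option.filter_eq_some_iff]

theorem PMatch.restrict_mY_eq_some {V E X Y L : Type} (μ : PMatch V E X Y) (G : TGraph V E L)
    (y : Y) (e : E) : (μ.restrict G).mY y = some e ↔ μ.mY y = some e ∧ e ∈ G.edges := by
  simp [PMatch.restrict, Option.filter_eq_some_iff]

theorem endpointOK_restrict {V E X Y L : Type} {μ : PMatch V E X Y} {G : TGraph V E L}
    {side : V ⊕ X} {v : V} (h : endpointOK μ side v) (hv : v ∈ G.nodes) :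
    endpointOK (μ.restrict G) side v := by
  cases side with
  | inl c => exact h
  | inr x => exact (μ.restrict_mX_eq_some G x v).2 ⟨h, hv⟩

/-- The two histories share incidence and labels, so a partial matching in one restricts to a
partial matching in the other, for arbitrary `i` and `k`. -/
theorem isPartialMatching_restrict {V E X Y L : Type} {P : TBGP V X Y L} {G : TGraph V E L}
    {ξ : E → Finset ℝ} {t : ℕ → ℝ} {i k : ℕ} {μ : PMatch V E X Y}
    (h : IsPartialMatching P (hist G ξ t i) μ) :
    IsPartialMatching P (hist G ξ t k) (μ.restrict (hist G ξ t k)) := by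
  obtain ⟨-, -, hend, hnl, hel⟩ := h
  refine ⟨fun x v hv => ((μ.restrict_mX_eq_some _ x v).1 hv).2,
    fun y e he => ((μ.restrict_mY_eq_some _ y e).1 he).2, fun y e he => ?_,
    fun x v l hv => hnl x v l ((μ.restrict_mX_eq_some _ x v).1 hv).1,
    fun y e l he => hel y e l ((μ.restrict_mY_eq_some _ y e).1 he).1⟩
  obtain ⟨hμ, hk⟩ := (μ.restrict_mY_eq_some _ y e).1 he
  obtain ⟨hs, hd⟩ := hend y e hμ
  exact ⟨endpointOK_restrict hs ⟨e, hk, Or.inl rfl⟩, endpointOK_restrict hd ⟨e, hk, Or.inr rfl⟩⟩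

theorem extends_restrict {V E X Y L : Type} {P : TBGP V X Y L} {G : TGraph V E L}
    {μ μ' : PMatch V E X Y} (h : IsPartialMatching P G μ) (hext : Extends μ μ') :
    Extends μ (μ'.restrict G) :=
  ⟨fun x v hv => (μ'.restrict_mX_eq_some G x v).2 ⟨hext.1 x v hv, h.1 x v hv⟩,
    fun y e he => (μ'.restrict_mY_eq_some G y e).2 ⟨hext.2 y e he, h.2.1 y e he⟩⟩

/-- Proposition: same prefix of timed words.
If `μ` is a maximal partial matching of `P` in `Hist(H, t_{i-1})` and `μ'` is a
partial matching of `P` in `Hist(H, t_i)` with `μ ⊆ μ'`, then the timed words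
`w_μ` and `w_{μ'}` agree on positions `1, …, i-1`. -/
theorem stmt0 {V E X Y L : Type}
    (G : TGraph V E L) (ξ : E → Finset ℝ) (P : TBGP V X Y L)
    (n : ℕ) (t : ℕ → ℝ)
    -- the graph is well-formed: endpoints of edges are nodes
    (hwf : ∀ e ∈ G.edges, G.src e ∈ G.nodes ∧ G.dst e ∈ G.nodes)
    -- timepoints are strictly positive
    (hpos : ∀ e ∈ G.edges, ∀ s ∈ ξ e, (0:ℝ) < s)
    -- `t 1 < t 2 < ⋯ < t n` enumerates the temporal domain of `H = (G, ξ)`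
    (hmono : ∀ j k, 1 ≤ j → j < k → k ≤ n → t j < t k)
    (hcover : ∀ e ∈ G.edges, ∀ s ∈ ξ e, ∃ j, 1 ≤ j ∧ j ≤ n ∧ t j = s)
    (hrange : ∀ j, 1 ≤ j → j ≤ n → ∃ e ∈ G.edges, t j ∈ ξ e)
    (i : ℕ) (hi1 : 1 ≤ i) (hin : i ≤ n)
    (μ μ' : PMatch V E X Y)
    (hmax : IsMaximal P (hist G ξ t (i - 1)) μ)
    (hpm' : IsPartialMatching P (hist G ξ t i) μ')
    (hext : Extends μ μ') :
    ∀ j, 1 ≤ j → j ≤ i - 1 → letterAt ξ t μ j = letterAt ξ t μ' j := by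
  intro j hj1 hji
  have heq : μ'.restrict (hist G ξ t (i - 1)) = μ :=
    hmax.2 _ (isPartialMatching_restrict hpm') (extends_restrict hmax.1 hext)
  ext y
  constructor
  · rintro ⟨e, he, ht⟩
    exact ⟨e, hext.2 y e he, ht⟩
  · rintro ⟨e, he, ht⟩
    have hmem : e ∈ (hist G ξ t (i - 1)).edges := ⟨(hpm'.2.1 y e he).1, j, hj1, hji, ht⟩
    refine ⟨e, ?_, ht⟩
    rw [← heq]
    exact (μ'.restrict_mY_eq_some _ y e).2 ⟨he, hmem⟩
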